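/- Every orientation-preserving diffeomorphism of the circle S¹ extends to a diffeomorphism of the closed disk D². -/

import Mathlib

open Metric Complex

noncomputable section

/-- The twist map: rotate `z` by the angle `q (|z|², arg z)`. -/
def twistMap (q : ℝ × ℝ → ℝ) (z : ℂ) : ℂ :=
  z * Complex.exp ((q (Complex.normSq z, Complex.arg z) : ℂ) * Complex.I)

lemma twist_q_int (q : ℝ × ℝ → ℝ) (hper : ∀ t x, q (t, x + 2 * Real.pi) = q (t, x))
    (t x y : ℝ) (h : (x : Real.Angle) = y) : q (t, x) = q (t, y) := by
  have hp : Function.Periodic (fun x => q (t, x)) (2 * Real.pi) := fun x => hper t x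
  obtain ⟨n, hn⟩ := Real.Angle.angle_eq_iff_two_pi_dvd_sub.1 h
  have : x = y + n * (2 * Real.pi) := by linarith
  rw [this]
  exact hp.int_mul n y

lemma contDiffAt_arg_slit {z : ℂ} (hz : z ∈ Complex.slitPlane) :
    ContDiffAt ℝ (⊤ : ℕ∞) Complex.arg z := by
  have h1 : ContDiffAt ℝ (⊤ : ℕ∞) Complex.log z :=
    (Complex.contDiffAt_log (n := (⊤ : ℕ∞)) hz).restrict_scalars ℝ
  have h2 := Complex.imCLM.contDiff.contDiffAt.comp z (n := (⊤ : ℕ∞)) h1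
  have h3 : (Complex.imCLM ∘ Complex.log) = Complex.arg := by
    ext w; simp [Complex.log_im]
  rwa [h3] at h2

lemma contDiff_normSq' : ContDiff ℝ (⊤ : ℕ∞) Complex.normSq := by
  have : (Complex.normSq : ℂ → ℝ) = fun z => Complex.reCLM z * Complex.reCLM z
      + Complex.imCLM z * Complex.imCLM z := by
    ext z; simp [Complex.normSq_apply]
  rw [this]
  fun_prop

lemma contDiff_twistMap (q : ℝ × ℝ → ℝ) (hq : ContDiff ℝ (⊤ : ℕ∞) q)
    (hper : ∀ t x, q (t, x + 2 * Real.pi) = q (t, x))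
    (h0 : ∀ t x, t ≤ 1 / 4 → q (t, x) = 0) :
    ContDiff ℝ (⊤ : ℕ∞) (twistMap q) := by
  have hn := contDiff_normSq'
  rw [contDiff_iff_contDiffAt]
  intro z
  have key : ContDiffAt ℝ (⊤ : ℕ∞) (fun z => q (Complex.normSq z, Complex.arg z)) z := by
    by_cases hz : z = 0
    · have : (fun z => q (Complex.normSq z, Complex.arg z)) =ᶠ[nhds z] fun _ => 0 := by
        have : ∀ᶠ w in nhds z, Complex.normSq w < 1 / 4 := by
          refine hn.continuous.continuousAt.eventually_lt continuousAt_const ?_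
          simp [hz]
        filter_upwards [this] with w hw
        exact h0 _ _ hw.le
      exact contDiffAt_const.congr_of_eventuallyEq this
    · by_cases hs : z ∈ Complex.slitPlane
      · exact hq.contDiffAt.comp z (hn.contDiffAt.prodMk (contDiffAt_arg_slit hs))
      · have hs' : -z ∈ Complex.slitPlane :=
          (Complex.mem_slitPlane_or_neg_mem_slitPlane hz).resolve_left hs
        have h1 : ContDiffAt ℝ (⊤ : ℕ∞) (fun w : ℂ => Complex.arg (-w) + Real.pi) z := by
          have : ContDiffAt ℝ (⊤ : ℕ∞) (fun w : ℂ => Complex.arg (-w)) z :=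
            ContDiffAt.comp z (g := Complex.arg) (contDiffAt_arg_slit hs') contDiff_neg.contDiffAt
          exact this.add contDiffAt_const
        have h2 := hq.contDiffAt.comp z (hn.contDiffAt.prodMk h1)
        refine h2.congr_of_eventuallyEq ?_
        filter_upwards [isOpen_ne.mem_nhds hz] with w hw
        apply twist_q_int q hper
        rw [Real.Angle.coe_add, Complex.arg_neg_coe_angle hw, add_assoc]
        simp
  unfold twistMap
  have h3 : ContDiffAt ℝ (⊤ : ℕ∞)
      (fun z => ((q (Complex.normSq z, Complex.arg z) : ℝ) : ℂ)) z :=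
    Complex.ofRealCLM.contDiff.contDiffAt.comp z key
  exact contDiffAt_id.mul (h3.mul contDiffAt_const).cexp

lemma twistMap_polar (q : ℝ × ℝ → ℝ)
    (hper : ∀ t x, q (t, x + 2 * Real.pi) = q (t, x)) (r θ : ℝ) (hr : 0 ≤ r) :
    twistMap q (r * Complex.exp (θ * Complex.I)) =
      r * Complex.exp ((θ + q (r ^ 2, θ) : ℝ) * Complex.I) := by
  rcases hr.eq_or_lt with rfl | hr
  · simp [twistMap]
  have h1 : Complex.normSq (r * Complex.exp (θ * Complex.I)) = r ^ 2 := by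
    rw [Complex.normSq_eq_norm_sq, norm_mul, Complex.norm_exp_ofReal_mul_I]
    simp
  have h2 : q (r ^ 2, Complex.arg (r * Complex.exp (θ * Complex.I))) = q (r ^ 2, θ) := by
    apply twist_q_int q hper
    have h := Complex.arg_mul_cos_add_sin_mul_I_coe_angle hr (θ : Real.Angle)
    rwa [Real.Angle.cos_coe, Real.Angle.sin_coe, Complex.ofReal_cos, Complex.ofReal_sin,
      ← Complex.exp_mul_I] at h
  unfold twistMap
  rw [h1, h2, mul_assoc, ← Complex.exp_add]
  push_cast
  ring_nf

lemma norm_twistMap (q : ℝ × ℝ → ℝ) (z : ℂ) : ‖twistMap q z‖ = ‖z‖ := by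
  rw [twistMap, norm_mul, Complex.norm_exp_ofReal_mul_I, mul_one]

lemma twistMap_twistMap (q q' : ℝ × ℝ → ℝ)
    (hper : ∀ t x, q (t, x + 2 * Real.pi) = q (t, x))
    (hper' : ∀ t x, q' (t, x + 2 * Real.pi) = q' (t, x))
    (h : ∀ t x, q (t, x) + q' (t, x + q (t, x)) = 0) (z : ℂ) :
    twistMap q' (twistMap q z) = z := by
  conv_lhs => rw [← Complex.norm_mul_exp_arg_mul_I z]
  rw [twistMap_polar q hper _ _ (norm_nonneg z), twistMap_polar q' hper' _ _ (norm_nonneg z),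
    add_assoc, h, add_zero, Complex.norm_mul_exp_arg_mul_I]

/-- A smooth map of the plane preserving the first coordinate, whose restriction to each vertical
line is bijective with nonvanishing derivative, has smooth inverse. -/
lemma exists_smooth_inverse (φ : ℝ × ℝ → ℝ) (hφ : ContDiff ℝ (⊤ : ℕ∞) φ)
    (hbij : ∀ t, Function.Bijective fun x => φ (t, x))
    (hd : ∀ p : ℝ × ℝ, fderiv ℝ φ p (0, 1) ≠ 0) :
    ∃ H : ℝ × ℝ → ℝ, ContDiff ℝ (⊤ : ℕ∞) H ∧ (∀ t x, H (t, φ (t, x)) = x) ∧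
      (∀ t y, φ (t, H (t, y)) = y) := by
  let Φ : ℝ × ℝ → ℝ × ℝ := fun p => (p.1, φ p)
  have hΦ : ContDiff ℝ (⊤ : ℕ∞) Φ := contDiff_fst.prodMk hφ
  have hΦb : Function.Bijective Φ := by
    constructor
    · rintro ⟨a, b⟩ ⟨c, d⟩ h
      have h1 : a = c := congrArg Prod.fst h
      subst h1
      have h2 : φ (a, b) = φ (a, d) := congrArg Prod.snd h
      rw [(hbij a).1 h2]
    · rintro ⟨a, b⟩
      obtain ⟨x, hx⟩ := (hbij a).2 b
      exact ⟨(a, x), Prod.ext rfl hx⟩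
  have hder : ∀ p, ∃ L : (ℝ × ℝ) ≃L[ℝ] (ℝ × ℝ), HasFDerivAt Φ (L : (ℝ × ℝ) →L[ℝ] (ℝ × ℝ)) p := by
    intro p
    let L : (ℝ × ℝ) →L[ℝ] (ℝ × ℝ) := (ContinuousLinearMap.fst ℝ ℝ ℝ).prod (fderiv ℝ φ p)
    have hL : HasFDerivAt Φ L p :=
      hasFDerivAt_fst.prodMk ((hφ.differentiable (by simp)) p).hasFDerivAt
    have hinj : Function.Injective (L : (ℝ × ℝ) →ₗ[ℝ] (ℝ × ℝ)) := by
      rw [injective_iff_map_eq_zero]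
      rintro ⟨a, b⟩ h
      have h1 : a = 0 := congrArg Prod.fst h
      subst h1
      have h2 : fderiv ℝ φ p (0, b) = 0 := congrArg Prod.snd h
      have h3 : ((0 : ℝ), b) = b • ((0 : ℝ), (1 : ℝ)) := by simp
      rw [h3, map_smul, smul_eq_mul] at h2
      rw [(mul_eq_zero.1 h2).resolve_right (hd p)]
      rfl
    refine ⟨(LinearEquiv.ofInjectiveEndo _ hinj).toContinuousLinearEquiv, ?_⟩
    convert hL using 1
    exact ContinuousLinearMap.ext fun v => rfl
  choose L hL using hder
  have hopen : IsOpenMap Φ := by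
    refine isOpenMap_of_hasStrictFDerivAt_equiv (f' := L) fun p => ?_
    exact hΦ.contDiffAt.hasStrictFDerivAt' (hL p) (by simp)
  let e : (ℝ × ℝ) ≃ₜ (ℝ × ℝ) :=
    (Equiv.ofBijective Φ hΦb).toHomeomorphOfContinuousOpen hΦ.continuous hopen
  have he : ContDiff ℝ (⊤ : ℕ∞) e.symm := e.contDiff_symm (f₀' := L) hL hΦ
  have e1 : ∀ p, e.symm (Φ p) = p := fun p => e.symm_apply_apply p
  have e2 : ∀ p, Φ (e.symm p) = p := fun p => e.apply_symm_apply p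
  have e3 : ∀ p, (e.symm p).1 = p.1 := fun p => by
    have h : (Φ (e.symm p)).1 = p.1 := by rw [e2]
    exact h
  refine ⟨fun p => (e.symm p).2, contDiff_snd.comp he, ?_, ?_⟩
  · intro t x
    exact congrArg Prod.snd (e1 (t, x))
  · intro t y
    have h1 : φ (e.symm (t, y)) = y := congrArg Prod.snd (e2 (t, y))
    have h2 : (t, (e.symm (t, y)).2) = e.symm (t, y) := Prod.ext (e3 (t, y)).symm rfl
    show φ (t, (e.symm (t, y)).2) = y
    rw [h2, h1]

lemma interp_bijective (f : ℝ → ℝ) (hf : Continuous f) (hmono : StrictMono f)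
    (hper : ∀ x, f (x + 2 * Real.pi) = f x + 2 * Real.pi) (s : ℝ) (h0 : 0 ≤ s) (h1 : s ≤ 1) :
    Function.Bijective fun x => x + s * (f x - x) := by
  constructor
  · apply StrictMono.injective
    intro x y hxy
    have := hmono hxy
    show x + s * (f x - x) < y + s * (f y - y)
    rcases h1.eq_or_lt with rfl | h1
    · linarith
    · nlinarith [mul_nonneg h0 (sub_pos.2 this).le, mul_pos (sub_pos.2 h1) (sub_pos.2 hxy)]
  · have hgp : Function.Periodic (fun x => f x - x) (2 * Real.pi) := by
      intro x; show f _ - _ = _; rw [hper]; ring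
    have hgc : Continuous fun x => f x - x := by fun_prop
    obtain ⟨C, hC⟩ := (isCompact_Icc (a := (0 : ℝ)) (b := 2 * Real.pi)).exists_bound_of_continuousOn
      hgc.continuousOn
    have hC' : ∀ x, |f x - x| ≤ C := by
      intro x
      obtain ⟨y, hy, hxy⟩ := hgp.exists_mem_Ico₀ Real.two_pi_pos x
      have := hC y ⟨hy.1, hy.2.le⟩
      rw [hxy]
      exact this
    have hCs : ∀ x, |s * (f x - x)| ≤ C := by
      intro x
      rw [abs_mul, abs_of_nonneg h0]
      nlinarith [hC' x, abs_nonneg (f x - x)]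
    have hC0 : 0 ≤ C := (abs_nonneg _).trans (hC' 0)
    intro y
    have hcont : ContinuousOn (fun x => x + s * (f x - x)) (Set.Icc (y - C) (y + C)) := by
      fun_prop
    obtain ⟨x, -, hx⟩ := intermediate_value_Icc (by linarith) hcont
      (show y ∈ Set.Icc _ _ from
        ⟨by have := (abs_le.1 (hCs (y - C))).2; linarith,
         by have := (abs_le.1 (hCs (y + C))).1; linarith⟩)
    exact ⟨x, hx⟩

end

/-- Smale's theorem: every orientation-preserving diffeomorphism of the circle
S¹ extends to a diffeomorphism of the closed disk D². The circle diffeomorphism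
is encoded by its lift `f : ℝ → ℝ`, a smooth, strictly increasing map with
nonvanishing derivative satisfying `f (x + 2π) = f x + 2π` (orientation-
preserving). The closed disk is the closed unit ball in ℂ ≅ ℝ², and the
extension is a smooth map of the disk onto itself with smooth inverse,
restricting on the boundary circle to the given circle diffeomorphism. -/
theorem stmt_4 (f : ℝ → ℝ)
    (hf : ContDiff ℝ (⊤ : ℕ∞) f) (hmono : StrictMono f)
    (hderiv : ∀ x, deriv f x ≠ 0)
    (hper : ∀ x, f (x + 2 * Real.pi) = f x + 2 * Real.pi) :
    ∃ F G : ℂ → ℂ,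
      ContDiffOn ℝ (⊤ : ℕ∞) F (closedBall 0 1) ∧
      ContDiffOn ℝ (⊤ : ℕ∞) G (closedBall 0 1) ∧
      Set.MapsTo F (closedBall 0 1) (closedBall 0 1) ∧
      Set.MapsTo G (closedBall 0 1) (closedBall 0 1) ∧
      (∀ z ∈ closedBall (0 : ℂ) 1, G (F z) = z) ∧
      (∀ z ∈ closedBall (0 : ℂ) 1, F (G z) = z) ∧
      (∀ θ : ℝ, F (Complex.exp (θ * Complex.I)) =
        Complex.exp ((f θ : ℂ) * Complex.I)) := by
  let χ : ℝ → ℝ := fun t => Real.smoothTransition (2 * t - 1 / 2)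
  have hχ : ContDiff ℝ (⊤ : ℕ∞) χ := by
    have h : ContDiff ℝ (⊤ : ℕ∞) (fun t : ℝ => 2 * t - 1 / 2) := by fun_prop
    exact Real.smoothTransition.contDiff.comp h
  have hχ0 : ∀ t, 0 ≤ χ t := fun t => Real.smoothTransition.nonneg _
  have hχ1 : ∀ t, χ t ≤ 1 := fun t => Real.smoothTransition.le_one _
  have hχz : ∀ t ≤ 1 / 4, χ t = 0 := fun t ht =>
    Real.smoothTransition.zero_of_nonpos (by linarith)
  have hχo : χ 1 = 1 := Real.smoothTransition.one_of_one_le (by norm_num)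
  let q : ℝ × ℝ → ℝ := fun p => χ p.1 * (f p.2 - p.2)
  have hq : ContDiff ℝ (⊤ : ℕ∞) q :=
    (hχ.comp contDiff_fst).mul ((hf.comp contDiff_snd).sub contDiff_snd)
  have hqp : ∀ t x, q (t, x + 2 * Real.pi) = q (t, x) := by
    intro t x
    simp only [q, hper]; ring
  have hq0 : ∀ t x, t ≤ 1 / 4 → q (t, x) = 0 := by
    intro t x ht
    simp only [q, hχz t ht, zero_mul]
  let φ : ℝ × ℝ → ℝ := fun p => p.2 + q p
  have hφ : ContDiff ℝ (⊤ : ℕ∞) φ := contDiff_snd.add hq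
  have hbij : ∀ t, Function.Bijective fun x => φ (t, x) := fun t =>
    interp_bijective f hf.continuous hmono hper (χ t) (hχ0 t) (hχ1 t)
  have hd : ∀ p : ℝ × ℝ, fderiv ℝ φ p (0, 1) ≠ 0 := by
    rintro ⟨t, x⟩
    have hfx : HasDerivAt f (deriv f x) x := ((hf.differentiable (by simp)) x).hasDerivAt
    have hpos : 0 < deriv f x := lt_of_le_of_ne hmono.monotone.deriv_nonneg (hderiv x).symm
    have h1 : HasDerivAt (fun x => φ (t, x)) (1 + χ t * (deriv f x - 1)) x :=
      (hasDerivAt_id x).add ((hfx.sub (hasDerivAt_id x)).const_mul (χ t))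
    have h2 : HasDerivAt (fun x => φ (t, x)) (fderiv ℝ φ (t, x) (0, 1)) x :=
      ((hφ.differentiable (by simp)) (t, x)).hasFDerivAt.comp_hasDerivAt x
        ((hasDerivAt_const x t).prodMk (hasDerivAt_id x))
    rw [h2.unique h1]
    apply ne_of_gt
    rcases (hχ1 t).eq_or_lt with h | h
    · rw [h]; linarith
    · nlinarith [mul_nonneg (hχ0 t) hpos.le]
  obtain ⟨H, hH, hH1, hH2⟩ := exists_smooth_inverse φ hφ hbij hd
  let q' : ℝ × ℝ → ℝ := fun p => H p - p.2
  have hq' : ContDiff ℝ (⊤ : ℕ∞) q' := hH.sub contDiff_snd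
  have hqp' : ∀ t x, q' (t, x + 2 * Real.pi) = q' (t, x) := by
    intro t y
    have h1 : φ (t, H (t, y) + 2 * Real.pi) = y + 2 * Real.pi := by
      conv_rhs => rw [← hH2 t y]
      simp only [φ, hqp]; ring
    have h2 := hH1 t (H (t, y) + 2 * Real.pi)
    rw [h1] at h2
    simp only [q', h2]; ring
  have hq0' : ∀ t x, t ≤ 1 / 4 → q' (t, x) = 0 := by
    intro t y ht
    have h1 := hH2 t y
    simp only [φ, hq0 t _ ht] at h1
    simp only [q']; linarith
  have hc1 : ∀ t x, q (t, x) + q' (t, x + q (t, x)) = 0 := by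
    intro t x
    have h1 := hH1 t x
    simp only [φ] at h1
    simp only [q', h1]; ring
  have hc2 : ∀ t x, q' (t, x) + q (t, x + q' (t, x)) = 0 := by
    intro t y
    have h1 := hH2 t y
    have h3 : y + q' (t, y) = H (t, y) := by simp only [q']; ring
    rw [h3]
    simp only [φ] at h1
    simp only [q']; linarith
  refine ⟨twistMap q, twistMap q', (contDiff_twistMap q hq hqp hq0).contDiffOn,
    (contDiff_twistMap q' hq' hqp' hq0').contDiffOn, ?_, ?_,
    fun z _ => twistMap_twistMap q q' hqp hqp' hc1 z,
    fun z _ => twistMap_twistMap q' q hqp' hqp hc2 z, ?_⟩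
  · intro z hz
    simpa [norm_twistMap] using hz
  · intro z hz
    simpa [norm_twistMap] using hz
  · intro θ
    have h := twistMap_polar q hqp 1 θ zero_le_one
    have h2 : θ + q (1 ^ 2, θ) = f θ := by simp [q, hχo]
    rw [h2] at h
    simpa using h
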